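/- Let K be a field of characteristic different from 2, let ℓ ≥ 1, let E be a finite étale commutative K-algebra of K-dimension 2ℓ, and let σ be a K-linear algebra involution of E with dim_K E^σ = ℓ. Let V be a 2ℓ-dimensional K-vector space and let f be a nondegenerate symmetric K-bilinear form on V admitting a totally isotropic subspace of dimension ℓ − 1. Assume there exists an invertible b ∈ E with σ(b) = b such that the discriminants of φ_b and of f coincide in K^×/(K^×)², i.e. the determinants of Gram matrices of φ_b and of f (with respect to any bases) differ by a nonzero square of K. Then there exists an injective K-algebra homomorphism ι : E → End_K(V) such that f(ι(a)x, y) = f(x, ι(σ(a))y) for all a ∈ E and x, y ∈ V. -/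

import Mathlib

universe u

/-!
It suffices to find a `σ`-invariant functional `t` on `E` such that the form
`(x, y) ↦ t (x * σ y)` is similar to `f`: multiplication by `a` is adjoint to multiplication by
`σ a` for this form, and a similarity transports the multiplication of `E` to `V`.

Start from `T = Tr(b ·)` and take `t = T(u ·)` with `u` fixed by `σ`. This multiplies the
discriminant by the norm of `u`. If `K` is infinite, `E` is generated by an invertible `β` with
`σ β = -β`. Letting `λ` read off the coefficient of `β ^ (2ℓ - 1)`, the functional `λ(β ·)` is
`σ`-invariant, hence of the form `T(u ·)`, and `1, β, …, β ^ (ℓ - 2)` span a totally isotropic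
subspace for it. The norm of `u` is a square because multiplication by `u` acts in the same way on
both summands of `E = E^σ ⊕ β E^σ`. If `K` is finite, `u = 1` works because, by Chevalley–Warning,
every quadratic form in at least three variables has a nontrivial zero.

Both forms are now orthogonal sums of `ℓ - 1` hyperbolic planes and a binary form. Binary forms
with the same discriminant are similar, and hyperbolic planes absorb the similarity factor.
-/

open Module Polynomial

section Embeddings

variable {K E : Type*} [Field K] [CommRing E] [Algebra K E]

theorem exists_embeddings_jointly_injective [FiniteDimensional K E] [Algebra.Etale K E]
    (Ω : Type*) [Field Ω] [Algebra K Ω] [IsSepClosed Ω] :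
    ∃ τ : Fin (finrank K E) → (E →ₐ[K] Ω),
      Function.Injective τ ∧ ∀ x, (∀ i, τ i x = 0) → x = 0 := by
  classical
  let A := TensorProduct K Ω E
  have : IsArtinianRing A := IsArtinianRing.of_finite Ω A
  have := Fintype.ofFinite (PrimeSpectrum A)
  let split : A ≃ₐ[Ω] (PrimeSpectrum A → Ω) := Algebra.FormallyEtale.equivPiOfIsSepClosed Ω A
  have hcard : Fintype.card (PrimeSpectrum A) = finrank K E := by
    rw [← finrank_fintype_fun_eq_card Ω, ← split.toLinearEquiv.finrank_eq, finrank_baseChange]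
  let index : Fin (finrank K E) ≃ PrimeSpectrum A := (Fintype.equivFinOfCardEq hcard).symm
  let ev (p : PrimeSpectrum A) : A →ₐ[Ω] Ω :=
    (Pi.evalAlgHom Ω (fun _ ↦ Ω) p).comp (split : A →ₐ[Ω] _)
  let incl : E →ₐ[K] A := Algebra.TensorProduct.includeRight
  refine ⟨fun i ↦ ((ev (index i)).restrictScalars K).comp incl, fun i j hij ↦ ?_, fun x hx ↦ ?_⟩
  · have hev : ev (index i) = ev (index j) := Algebra.TensorProduct.ext_ring hij
    by_contra hne
    have hsingle := DFunLike.congr_fun hev (split.symm (Pi.single (index i) 1))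
    simp [ev, Ne.symm hne] at hsingle
  · have hinj : Function.Injective incl :=
      Algebra.TensorProduct.includeRight_injective (algebraMap K Ω).injective
    have hsplit : split (incl x) = 0 := funext fun p ↦ by simpa [ev] using hx (index.symm p)
    exact hinj (split.injective (by rw [hsplit, map_zero, map_zero]))

theorem exists_forall_linearMap_apply_ne_zero {K M N ι : Type*} [DivisionRing K] [Infinite K]
    [AddCommGroup M] [Module K M] [AddCommGroup N] [Module K N] [Finite ι]
    (g : ι → M →ₗ[K] N) (hg : ∀ i, g i ≠ 0) : ∃ x, ∀ i, g i x ≠ 0 := by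
  by_contra! h
  obtain ⟨i, hi⟩ := Subspace.exists_eq_top_of_iUnion_eq_univ
    (p := fun i ↦ LinearMap.ker (g i)) (Set.eq_univ_of_forall fun x ↦ by simpa using h x)
  exact hg i (LinearMap.ker_eq_top.mp hi)

theorem linearIndependent_pow_of_injective_algHom {Ω : Type*} [CommRing Ω] [IsDomain Ω]
    [Algebra K Ω] {n : ℕ} (τ : Fin n → (E →ₐ[K] Ω)) {x : E}
    (hx : Function.Injective fun i ↦ τ i x) :
    LinearIndependent K fun i : Fin n ↦ x ^ (i : ℕ) := by
  have hcols := Matrix.linearIndependent_cols_of_det_ne_zero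
    (Matrix.det_vandermonde_ne_zero_iff.mpr hx)
  refine .of_comp (LinearMap.pi fun i ↦ (τ i).toLinearMap) ?_
  have hpow : (LinearMap.pi fun i ↦ (τ i).toLinearMap) ∘ (fun i : Fin n ↦ x ^ (i : ℕ)) =
      (Matrix.vandermonde fun i ↦ τ i x).col := by
    ext i j
    simp [Matrix.vandermonde_apply]
  rw [hpow]
  exact hcols.restrict_scalars' K

end Embeddings

section Involution

variable {K E : Type*} [Field K] [CommRing E] [Algebra K E] {σ : E →ₐ[K] E}

/-- The subspace `E^σ` of elements fixed by `σ`, written as a kernel. -/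
def fixedElements (σ : E →ₐ[K] E) : Submodule K E :=
  LinearMap.ker (σ.toLinearMap - LinearMap.id)

/-- The `-1`-eigenspace of `σ`: it complements `E^σ` when `σ` is an involution and `2 ≠ 0`. -/
def skewElements (σ : E →ₐ[K] E) : Submodule K E :=
  LinearMap.ker (σ.toLinearMap + LinearMap.id)

theorem mem_fixedElements {x : E} : x ∈ fixedElements σ ↔ σ x = x := by
  simp [fixedElements, sub_eq_zero]

theorem mem_skewElements {x : E} : x ∈ skewElements σ ↔ σ x = -x := by
  simp [skewElements, add_eq_zero_iff_eq_neg]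

theorem mul_mem_fixedElements {x y : E} (hx : x ∈ fixedElements σ) (hy : y ∈ fixedElements σ) :
    x * y ∈ fixedElements σ := by
  rw [mem_fixedElements] at *
  rw [map_mul, hx, hy]

theorem mul_mem_fixedElements_of_skew {x y : E} (hx : x ∈ skewElements σ)
    (hy : y ∈ skewElements σ) : x * y ∈ fixedElements σ := by
  rw [mem_skewElements] at hx hy
  rw [mem_fixedElements, map_mul, hx, hy, neg_mul_neg]

theorem mul_mem_skewElements_iff {β x : E} (hβ : β ∈ skewElements σ) (hβu : IsUnit β) :
    β * x ∈ skewElements σ ↔ x ∈ fixedElements σ := by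
  rw [mem_skewElements, mem_fixedElements, map_mul, mem_skewElements.mp hβ, neg_mul, neg_inj,
    hβu.mul_right_inj]

theorem isCompl_fixedElements_skewElements (h2 : (2 : K) ≠ 0) (hσ : Function.Involutive σ) :
    IsCompl (fixedElements σ) (skewElements σ) := by
  have : Invertible (2 : K) := invertibleOfNonzero h2
  refine ⟨Submodule.disjoint_def.mpr fun x hfix hskew ↦ ?_,
    codisjoint_iff.mpr (eq_top_iff.mpr fun x _ ↦ ?_)⟩
  · rw [mem_fixedElements] at hfix
    rw [mem_skewElements, hfix, eq_neg_iff_add_eq_zero, ← two_smul K x] at hskew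
    exact (smul_eq_zero.mp hskew).resolve_left h2
  · have hx : x = (⅟2 : K) • (x + σ x) + (⅟2 : K) • (x - σ x) := by
      rw [← smul_add, add_add_sub_cancel, ← two_smul K x, invOf_smul_smul]
    rw [hx]
    refine Submodule.add_mem_sup (Submodule.smul_mem _ _ ?_) (Submodule.smul_mem _ _ ?_)
    · rw [mem_fixedElements, map_add, hσ, add_comm]
    · rw [mem_skewElements, map_sub, hσ, neg_sub]

theorem algHom_ext_of_eqOn_skewElements {Ω : Type*} [CommRing Ω] [Algebra K Ω] (h2 : (2 : K) ≠ 0)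
    (hσ : Function.Involutive σ) {δ : E} (hδ : δ ∈ skewElements σ) (hδu : IsUnit δ)
    {τ τ' : E →ₐ[K] Ω} (h : Set.EqOn τ τ' (skewElements σ)) : τ = τ' := by
  have hfix : Set.EqOn τ τ' (fixedElements σ) := fun x hx ↦ by
    have hmul := h ((mul_mem_skewElements_iff hδ hδu).mpr hx)
    rw [map_mul, map_mul, ← h hδ] at hmul
    exact (hδu.map τ).mul_left_cancel hmul
  ext x
  obtain ⟨y, hy, z, hz, rfl⟩ := Submodule.mem_sup.mp
    ((isCompl_fixedElements_skewElements h2 hσ).sup_eq_top ▸ Submodule.mem_top : x ∈ _)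
  rw [map_add, map_add, hfix hy, h hz]

theorem exists_isUnit_mem_skewElements [FiniteDimensional K E] [Algebra.Etale K E] [Infinite K]
    (hdim : finrank K (skewElements σ) = finrank K (fixedElements σ)) :
    ∃ δ ∈ skewElements σ, IsUnit δ := by
  obtain ⟨τ, -, hτ⟩ := exists_embeddings_jointly_injective (K := K) (E := E) (AlgebraicClosure K)
  let restr i := (τ i).toLinearMap ∘ₗ (skewElements σ).subtype
  obtain ⟨⟨δ, hδ⟩, hne⟩ :=
    exists_forall_linearMap_apply_ne_zero (fun i : {i // restr i ≠ 0} ↦ restr i) fun i ↦ i.2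
  let mulδ : skewElements σ →ₗ[K] fixedElements σ :=
    (LinearMap.mulLeft K δ).restrict fun _ hy ↦ mul_mem_fixedElements_of_skew hδ hy
  have hinj : Function.Injective mulδ := by
    refine (injective_iff_map_eq_zero mulδ).mpr fun y hy ↦ Subtype.ext (hτ y fun i ↦ ?_)
    by_cases hi : restr i = 0
    · exact DFunLike.congr_fun hi y
    · have hmul : τ i δ * τ i y = 0 := by
        rw [← map_mul, show δ * (y : E) = 0 from congrArg Subtype.val hy, map_zero]
      exact (mul_eq_zero.mp hmul).resolve_left (hne ⟨i, hi⟩)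
  obtain ⟨y, hy⟩ := (LinearMap.injective_iff_surjective_of_finrank_eq_finrank hdim).mp hinj
    ⟨1, mem_fixedElements.mpr (map_one σ)⟩
  exact ⟨δ, hδ, IsUnit.of_mul_eq_one (y : E) (congrArg Subtype.val hy)⟩

theorem exists_powerBasis_gen_mem_skewElements [FiniteDimensional K E] [Algebra.Etale K E]
    [Infinite K] (h2 : (2 : K) ≠ 0) (hσ : Function.Involutive σ)
    (hdim : finrank K (skewElements σ) = finrank K (fixedElements σ)) :
    ∃ pb : PowerBasis K E, pb.gen ∈ skewElements σ ∧ IsUnit pb.gen := by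
  obtain ⟨δ, hδ, hδu⟩ := exists_isUnit_mem_skewElements hdim
  obtain ⟨τ, hτinj, hτ⟩ :=
    exists_embeddings_jointly_injective (K := K) (E := E) (AlgebraicClosure K)
  let restr i := (τ i).toLinearMap ∘ₗ (skewElements σ).subtype
  obtain ⟨⟨β, hβ⟩, hne⟩ := exists_forall_linearMap_apply_ne_zero
    (Sum.elim restr fun p : {p : _ × _ // p.1 ≠ p.2} ↦ restr p.1.1 - restr p.1.2) <| by
      rintro (i | ⟨⟨i, j⟩, hij⟩) h0
      · exact (hδu.map (τ i)).ne_zero (DFunLike.congr_fun h0 ⟨δ, hδ⟩)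
      · refine hij (hτinj (algHom_ext_of_eqOn_skewElements h2 hσ hδ hδu fun x hx ↦ ?_))
        exact sub_eq_zero.mp (DFunLike.congr_fun h0 ⟨x, hx⟩)
  have hsep : Function.Injective fun i ↦ τ i β := fun i j hij ↦ by
    by_contra hij'
    exact hne (.inr ⟨(i, j), hij'⟩) (sub_eq_zero.mpr hij)
  have hunit : IsUnit β := by
    have : IsArtinianRing E := IsArtinianRing.of_finite K E
    refine IsArtinianRing.isUnit_of_mem_nonZeroDivisors
      (mem_nonZeroDivisors_iff_right.mpr fun y hy ↦ hτ y fun i ↦ ?_)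
    have hmul : τ i y * τ i β = 0 := by rw [← map_mul, hy, map_zero]
    exact (mul_eq_zero.mp hmul).resolve_right (hne (.inl i))
  have hli := linearIndependent_pow_of_injective_algHom τ hsep
  exact ⟨⟨β, finrank K E, basisOfLinearIndependentOfCardEqFinrank' _ hli (by simp),
    fun i ↦ by simp⟩, hβ, hunit⟩

theorem isSquare_norm_of_mem_fixedElements [FiniteDimensional K E] (h2 : (2 : K) ≠ 0)
    (hσ : Function.Involutive σ) {β u : E} (hβ : β ∈ skewElements σ) (hβu : IsUnit β)
    (hu : u ∈ fixedElements σ) : IsSquare (Algebra.norm K u) := by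
  have hcompl := isCompl_fixedElements_skewElements h2 hσ
  let F := fixedElements σ
  let sum : F × F →ₗ[K] E := F.subtype.coprod (LinearMap.mulLeft K β ∘ₗ F.subtype)
  have hinj : Function.Injective sum := by
    refine (injective_iff_map_eq_zero sum).mpr fun ⟨⟨x, hx⟩, ⟨y, hy⟩⟩ h ↦ ?_
    obtain ⟨hx0, hy0⟩ := Submodule.disjoint_iff_add_eq_zero.mp hcompl.disjoint hx
      ((mul_mem_skewElements_iff hβ hβu).mpr hy) h
    rw [hβu.mul_right_eq_zero] at hy0
    simp [hx0, hy0]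
  have hsurj : Function.Surjective sum := fun z ↦ by
    obtain ⟨x, hx, y, hy, rfl⟩ := Submodule.mem_sup.mp
      (hcompl.sup_eq_top ▸ Submodule.mem_top : z ∈ _)
    obtain ⟨y, rfl⟩ := hβu.dvd (a := y)
    exact ⟨(⟨x, hx⟩, ⟨y, (mul_mem_skewElements_iff hβ hβu).mp hy⟩), rfl⟩
  let decomp := LinearEquiv.ofBijective sum ⟨hinj, hsurj⟩
  let mulu : F →ₗ[K] F := (LinearMap.mulLeft K u).restrict fun _ hy ↦ mul_mem_fixedElements hu hy
  have hconj : Algebra.lmul K E u =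
      decomp.toLinearMap ∘ₗ (mulu.prodMap mulu) ∘ₗ decomp.symm.toLinearMap := by
    ext z
    obtain ⟨⟨x, y⟩, rfl⟩ := decomp.surjective z
    simp only [LinearMap.comp_apply, LinearEquiv.coe_coe, LinearEquiv.symm_apply_apply]
    change u * (x + β * y) = u * x + β * (u * y)
    ring
  refine ⟨LinearMap.det mulu, ?_⟩
  rw [Algebra.norm_apply, hconj, LinearMap.det_conj, LinearMap.det_prodMap]

end Involution

section TwistedForm

variable {K E : Type*} [Field K] [CommRing E] [Algebra K E] {σ : E →ₐ[K] E}

/-- The form `(x, y) ↦ t (x * σ y)` attached to an algebra endomorphism `σ` and a linear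
functional `t`; the form `φ_b` of the statement is the case `t = Tr(b ·)`. -/
def twistedForm (σ : E →ₐ[K] E) (t : Dual K E) : LinearMap.BilinForm K E :=
  ((LinearMap.mul K E).compr₂ t).compl₂ σ.toLinearMap

@[simp]
theorem twistedForm_apply (t : Dual K E) (x y : E) : twistedForm σ t x y = t (x * σ y) := rfl

theorem twistedForm_isSymm (hσ : Function.Involutive σ) {t : Dual K E} (ht : ∀ x, t (σ x) = t x) :
    (twistedForm σ t).IsSymm :=
  ⟨fun x y ↦ by rw [twistedForm_apply, twistedForm_apply, ← ht, map_mul, hσ, mul_comm]⟩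

theorem twistedForm_comp_mulLeft (t : Dual K E) (u : E) :
    twistedForm σ (t ∘ₗ LinearMap.mulLeft K u) =
      (twistedForm σ t).compLeft (LinearMap.mulLeft K u) := by
  ext x y
  simp [mul_assoc]

theorem det_toMatrix_twistedForm_comp_mulLeft {ι : Type*} [Fintype ι] [DecidableEq ι]
    (B : Basis ι K E) (t : Dual K E) (u : E) :
    (LinearMap.BilinForm.toMatrix B (twistedForm σ (t ∘ₗ LinearMap.mulLeft K u))).det =
      Algebra.norm K u * (LinearMap.BilinForm.toMatrix B (twistedForm σ t)).det := by
  rw [twistedForm_comp_mulLeft, LinearMap.BilinForm.toMatrix_compLeft, Matrix.det_mul,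
    Matrix.det_transpose, LinearMap.det_toMatrix, Algebra.norm_apply]
  rfl

theorem exists_fixed_eq_comp_mulLeft [FiniteDimensional K E] (hσ : Function.Involutive σ)
    {T t : Dual K E} (hT : ∀ x, T (σ x) = T x) (hTn : (twistedForm σ T).Nondegenerate)
    (ht : ∀ x, t (σ x) = t x) :
    ∃ u ∈ fixedElements σ, t = T ∘ₗ LinearMap.mulLeft K u := by
  obtain ⟨u, hu⟩ := ((twistedForm σ T).toDual hTn).surjective (t ∘ₗ σ.toLinearMap)
  have hut (x : E) : T (u * x) = t x := by
    simpa [LinearMap.BilinForm.toDual_def, hσ x] using DFunLike.congr_fun hu (σ x)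
  refine ⟨u, mem_fixedElements.mpr (sub_eq_zero.mp (hTn.1 _ fun y ↦ ?_)),
    LinearMap.ext fun x ↦ (hut x).symm⟩
  rw [twistedForm_apply, sub_mul, map_sub, ← map_mul, hT, hut, hut, ht, sub_self]

theorem toMatrix_twistedForm_trace_comp_mulLeft {ι : Type*} [Fintype ι] [DecidableEq ι]
    (B : Basis ι K E) (b : E) :
    LinearMap.BilinForm.toMatrix B (twistedForm σ (Algebra.trace K E ∘ₗ LinearMap.mulLeft K b)) =
      Matrix.of fun i j ↦ Algebra.trace K E (B i * b * σ (B j)) := by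
  ext i j
  simp [LinearMap.BilinForm.toMatrix_apply, mul_left_comm, mul_assoc]

theorem trace_mulLeft_map (hσ : Function.Involutive σ) {b : E} (hb : σ b = b) (x : E) :
    Algebra.trace K E (b * σ x) = Algebra.trace K E (b * x) := by
  let σ' : E ≃ₐ[K] E := .ofAlgHom σ σ (AlgHom.ext hσ) (AlgHom.ext hσ)
  rw [← Algebra.trace_eq_of_algEquiv σ' (b * x)]
  simp [σ', hb]

end TwistedForm

section TopCoeff

variable {K E : Type*} [Field K] [CommRing E] [Algebra K E] {σ : E →ₐ[K] E}

/-- The functional reading off the coefficient of the highest power `gen ^ (dim - 1)` in the power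
basis; the test `i + 1 = dim` keeps it meaningful (zero) when `dim = 0`. -/
noncomputable def topCoeff (pb : PowerBasis K E) : Dual K E :=
  pb.basis.constr K fun i ↦ if (i : ℕ) + 1 = pb.dim then 1 else 0

theorem topCoeff_gen_pow (pb : PowerBasis K E) {i : ℕ} (hi : i < pb.dim) :
    topCoeff pb (pb.gen ^ i) = if i + 1 = pb.dim then 1 else 0 := by
  rw [← pb.basis_eq_pow ⟨i, hi⟩, topCoeff, Basis.constr_basis]

theorem topCoeff_aeval (pb : PowerBasis K E) {p : K[X]} (hp : p.natDegree + 1 = pb.dim) :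
    topCoeff pb (aeval pb.gen p) = p.leadingCoeff := by
  rw [aeval_eq_sum_range, map_sum, Finset.sum_range_succ, Finset.sum_eq_zero fun i hi ↦ ?_,
    map_smul, topCoeff_gen_pow pb (by omega), if_pos hp, smul_eq_mul, mul_one, zero_add,
    leadingCoeff]
  rw [Finset.mem_range] at hi
  rw [map_smul, topCoeff_gen_pow pb (by omega), if_neg (by omega), smul_zero]

theorem eq_zero_of_forall_topCoeff_mul_eq_zero (pb : PowerBasis K E) {x : E}
    (hx : ∀ y, topCoeff pb (x * y) = 0) : x = 0 := by
  nontriviality E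
  obtain ⟨p, hp, rfl⟩ := pb.exists_eq_aeval x
  obtain ⟨k, hk⟩ := Nat.exists_eq_add_of_lt hp
  by_cases hp0 : p = 0
  · rw [hp0, map_zero]
  have hdeg : (p * X ^ k).natDegree + 1 = pb.dim := by
    rw [natDegree_mul_X_pow k hp0, hk]
  have htop := topCoeff_aeval pb hdeg
  rw [map_mul, map_pow, aeval_X, hx, leadingCoeff_mul_X_pow] at htop
  exact absurd (leadingCoeff_eq_zero.mp htop.symm) hp0

theorem topCoeff_map_of_gen_mem_skewElements (pb : PowerBasis K E)
    (hgen : pb.gen ∈ skewElements σ) (hdim : Even pb.dim) (x : E) :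
    topCoeff pb (σ x) = -topCoeff pb x := by
  have hlin : topCoeff pb ∘ₗ σ.toLinearMap = -topCoeff pb := pb.basis.ext fun i ↦ by
    have hpow : σ (pb.gen ^ (i : ℕ)) = (-1) ^ (i : ℕ) * pb.gen ^ (i : ℕ) := by
      rw [map_pow, mem_skewElements.mp hgen, neg_pow]
    by_cases hi : (i : ℕ) + 1 = pb.dim
    · have hodd : Odd (i : ℕ) :=
        Nat.not_even_iff_odd.mp (Nat.even_add_one.mp (hi.symm ▸ hdim))
      simp [pb.basis_eq_pow, hpow, hodd.neg_one_pow]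
    · rcases neg_one_pow_eq_or E (i : ℕ) with hs | hs <;>
        simp [pb.basis_eq_pow, hpow, hs, topCoeff_gen_pow, hi]
  exact DFunLike.congr_fun hlin x

end TopCoeff

section Isotropy

variable {K V : Type*} [Field K] [AddCommGroup V] [Module K V] {f : LinearMap.BilinForm K V}

/-- The form `f` vanishes identically on the subspace `W`. -/
def IsTotallyIsotropic (f : LinearMap.BilinForm K V) (W : Submodule K V) : Prop :=
  ∀ w ∈ W, ∀ w' ∈ W, f w w' = 0

theorem isTotallyIsotropic_span {s : Set V} (hs : ∀ x ∈ s, ∀ y ∈ s, f x y = 0) :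
    IsTotallyIsotropic f (Submodule.span K s) := fun w hw w' hw' ↦ by
  induction hw, hw' using Submodule.span_induction₂ with
  | mem_mem x y hx hy => exact hs x hx y hy
  | zero_left => simp
  | zero_right => simp
  | add_left x y z _ _ _ hx hy => simp [hx, hy]
  | add_right x y z _ _ _ hx hy => simp [hx, hy]
  | smul_left r x y _ _ h => simp [h]
  | smul_right r x y _ _ h => simp [h]

theorem IsTotallyIsotropic.sup_span_singleton (hf : f.IsRefl) {W : Submodule K V}
    (hW : IsTotallyIsotropic f W) {u : V} (hu : u ∈ f.orthogonal W) (huu : f u u = 0) :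
    IsTotallyIsotropic f (W ⊔ K ∙ u) := by
  rw [← Submodule.span_eq W, ← Submodule.span_union]
  refine isTotallyIsotropic_span ?_
  rintro x (hx | rfl) y (hy | rfl)
  · exact hW x hx y hy
  · exact hu x hx
  · exact hf _ _ (hu y hy)
  · exact huu

theorem exists_ne_zero_apply_self_eq_zero [Finite K] (f : LinearMap.BilinForm K V)
    (hV : 2 < finrank K V) : ∃ v ≠ 0, f v v = 0 := by
  classical
  have := Fintype.ofFinite K
  have : FiniteDimensional K V := .of_finrank_pos (by omega)
  let v := finBasis K V
  let q : MvPolynomial (Fin (finrank K V)) K :=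
    ∑ i, ∑ j, MvPolynomial.C (f (v i) (v j)) * (MvPolynomial.X i * MvPolynomial.X j)
  have hdeg : q.totalDegree ≤ 2 := MvPolynomial.IsHomogeneous.totalDegree_le <|
    .sum _ _ _ fun i _ ↦ .sum _ _ _ fun j _ ↦
      ((MvPolynomial.isHomogeneous_X K i).mul (MvPolynomial.isHomogeneous_X K j)).C_mul _
  have heval (x : Fin (finrank K V) → K) :
      MvPolynomial.eval x q = f (v.equivFun.symm x) (v.equivFun.symm x) := by
    simp only [q, Basis.equivFun_symm_apply, map_sum, map_mul, MvPolynomial.eval_C,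
      MvPolynomial.eval_X, map_smul, LinearMap.sum_apply, LinearMap.smul_apply, smul_eq_mul,
      Finset.mul_sum]
    rw [Finset.sum_comm]
    exact Finset.sum_congr rfl fun i _ ↦ Finset.sum_congr rfl fun j _ ↦ by ring
  obtain ⟨p, hp⟩ := CharP.exists K
  have hdvd := char_dvd_card_solutions p (f := q) (by simpa using hdeg.trans_lt hV)
  let zero : {x // MvPolynomial.eval x q = 0} := ⟨0, by rw [heval, map_zero, map_zero]⟩
  have : Nontrivial {x // MvPolynomial.eval x q = 0} := Fintype.one_lt_card_iff_nontrivial.mp <|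
    (CharP.char_is_prime K p).one_lt.trans_le <|
      Nat.le_of_dvd (Fintype.card_pos_iff.mpr ⟨zero⟩) hdvd
  obtain ⟨⟨x, hx⟩, hne⟩ := exists_ne zero
  have hx0 : x ≠ 0 := fun h ↦ hne (Subtype.ext h)
  exact ⟨v.equivFun.symm x, v.equivFun.symm.map_ne_zero_iff.mpr hx0, heval x ▸ hx⟩

theorem exists_isTotallyIsotropic_finrank_eq [Finite K] [FiniteDimensional K V] (hf : f.IsRefl)
    {k : ℕ} (hk : 2 * k < finrank K V) :
    ∃ W : Submodule K V, finrank K W = k ∧ IsTotallyIsotropic f W := by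
  induction k with
  | zero => exact ⟨⊥, finrank_bot K V, by simp [IsTotallyIsotropic]⟩
  | succ k ih =>
    obtain ⟨W, hW, hiso⟩ := ih (by omega)
    obtain ⟨C, hC⟩ := Submodule.exists_isCompl W
    have hinter : 2 < finrank K (f.orthogonal W ⊓ C : Submodule K V) := by
      have hperp := LinearMap.BilinForm.finrank_add_finrank_orthogonal hf W
      have hcompl := Submodule.finrank_add_eq_of_isCompl hC
      have hinf := Submodule.finrank_sup_add_finrank_inf_eq (f.orthogonal W) C
      have hsup := Submodule.finrank_le (f.orthogonal W ⊔ C)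
      omega
    obtain ⟨⟨u, huperp, huC⟩, hu0, huu⟩ := exists_ne_zero_apply_self_eq_zero (f.restrict _) hinter
    have huW : u ∉ W := fun h ↦ hu0 (Subtype.ext (Submodule.disjoint_def.mp hC.disjoint u h huC))
    exact ⟨W ⊔ K ∙ u, by rw [Submodule.finrank_sup_span_singleton huW, hW],
      hiso.sup_span_singleton hf huperp huu⟩

end Isotropy

section LargeIsotropicSubspace

variable {K E : Type*} [Field K] [CommRing E] [Algebra K E] {σ : E →ₐ[K] E}

theorem exists_isTotallyIsotropic_of_gen_mem_skewElements (pb : PowerBasis K E)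
    (hgen : pb.gen ∈ skewElements σ) {k : ℕ} (hk : 2 * k < pb.dim) :
    ∃ W : Submodule K E, finrank K W = k ∧
      IsTotallyIsotropic (twistedForm σ (topCoeff pb ∘ₗ LinearMap.mulLeft K pb.gen)) W := by
  have hle : k ≤ pb.dim := by omega
  have hli : LinearIndependent K fun i : Fin k ↦ pb.gen ^ (i : ℕ) :=
    (pb.coe_basis ▸ pb.basis.linearIndependent :).comp (Fin.castLE hle) (Fin.castLE_injective hle)
  refine ⟨Submodule.span K (Set.range fun i : Fin k ↦ pb.gen ^ (i : ℕ)),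
    by rw [finrank_span_eq_card hli, Fintype.card_fin], isTotallyIsotropic_span ?_⟩
  rintro _ ⟨i, rfl⟩ _ ⟨j, rfl⟩
  have hmul : pb.gen * (pb.gen ^ (i : ℕ) * σ (pb.gen ^ (j : ℕ))) =
      (-1 : K) ^ (j : ℕ) • pb.gen ^ (i + j + 1 : ℕ) := by
    rw [map_pow, mem_skewElements.mp hgen, neg_pow, Algebra.smul_def, map_pow, map_neg, map_one]
    ring
  have htop : topCoeff pb (pb.gen ^ (i + j + 1 : ℕ)) = 0 := by
    rw [topCoeff_gen_pow pb (by omega), if_neg (by omega)]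
  rw [twistedForm_apply, LinearMap.comp_apply, LinearMap.mulLeft_apply, hmul, map_smul, htop,
    smul_zero]

theorem topCoeff_gen_mul_map (pb : PowerBasis K E) (hgen : pb.gen ∈ skewElements σ)
    (hdim : Even pb.dim) (x : E) :
    topCoeff pb (pb.gen * σ x) = topCoeff pb (pb.gen * x) := by
  rw [← neg_neg (pb.gen * σ x), ← neg_mul, ← mem_skewElements.mp hgen, ← map_mul, map_neg,
    topCoeff_map_of_gen_mem_skewElements pb hgen hdim, neg_neg]

theorem exists_isUnit_fixed_isTotallyIsotropic [FiniteDimensional K E] [Algebra.Etale K E]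
    (h2 : (2 : K) ≠ 0) (hσ : Function.Involutive σ)
    (hdim : finrank K E = 2 * finrank K (fixedElements σ)) {T : Dual K E}
    (hT : ∀ x, T (σ x) = T x) (hTn : (twistedForm σ T).Nondegenerate) {k : ℕ}
    (hk : 2 * k < finrank K E) :
    ∃ u ∈ fixedElements σ, IsUnit u ∧ IsSquare (Algebra.norm K u) ∧ ∃ W : Submodule K E,
      finrank K W = k ∧ IsTotallyIsotropic (twistedForm σ (T ∘ₗ LinearMap.mulLeft K u)) W := by
  rcases finite_or_infinite K with _ | _
  · have hrefl := (twistedForm_isSymm hσ hT).isRefl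
    refine ⟨1, mem_fixedElements.mpr (map_one σ), isUnit_one, by simp, ?_⟩
    rw [LinearMap.mulLeft_one, LinearMap.comp_id]
    exact exists_isTotallyIsotropic_finrank_eq hrefl hk
  have hskew : finrank K (skewElements σ) = finrank K (fixedElements σ) := by
    have := Submodule.finrank_add_eq_of_isCompl (isCompl_fixedElements_skewElements h2 hσ)
    omega
  obtain ⟨pb, hgen, hunit⟩ := exists_powerBasis_gen_mem_skewElements h2 hσ hskew
  rw [pb.finrank] at hdim hk
  obtain ⟨u, hu, htu⟩ := exists_fixed_eq_comp_mulLeft hσ hT hTn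
    (t := topCoeff pb ∘ₗ LinearMap.mulLeft K pb.gen)
    (topCoeff_gen_mul_map pb hgen (hdim ▸ even_two_mul _))
  have huu : IsUnit u := by
    have : IsArtinianRing E := IsArtinianRing.of_finite K E
    refine IsArtinianRing.isUnit_of_mem_nonZeroDivisors
      (mem_nonZeroDivisors_iff_left.mpr fun x hx ↦ hunit.mul_right_eq_zero.mp ?_)
    refine eq_zero_of_forall_topCoeff_mul_eq_zero pb fun y ↦ ?_
    have htop := DFunLike.congr_fun htu (x * y)
    rwa [LinearMap.comp_apply, LinearMap.comp_apply, LinearMap.mulLeft_apply,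
      LinearMap.mulLeft_apply, ← mul_assoc, ← mul_assoc, hx, zero_mul, map_zero] at htop
  exact ⟨u, hu, huu, isSquare_norm_of_mem_fixedElements h2 hσ hgen hunit hu,
    htu ▸ exists_isTotallyIsotropic_of_gen_mem_skewElements pb hgen hk⟩

end LargeIsotropicSubspace

section WittDecomposition

open Matrix

variable {K V ι : Type*} [Field K] [AddCommGroup V] [Module K V] [DecidableEq ι]
  {f : LinearMap.BilinForm K V}

theorem exists_isotropic_dual_family [Finite ι] [FiniteDimensional K V] (h2 : (2 : K) ≠ 0)
    (hf : f.IsSymm) (hn : f.Nondegenerate) {W : Submodule K V} (hW : IsTotallyIsotropic f W)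
    (w : Basis ι K W) :
    ∃ z : ι → V, (∀ i j, f (z i) (w j) = if i = j then 1 else 0) ∧ ∀ i j, f (z i) (z j) = 0 := by
  have := Fintype.ofFinite ι
  have hdual (i : ι) : ∃ y : V, ∀ j, f y (w j) = if i = j then 1 else 0 := by
    obtain ⟨g, hg⟩ := LinearMap.exists_extend (w.coord i)
    obtain ⟨y, hy⟩ := (f.toDual hn).surjective g
    refine ⟨y, fun j ↦ ?_⟩
    rw [← LinearMap.BilinForm.toDual_def hn, hy, ← Submodule.subtype_apply,
      ← LinearMap.comp_apply, hg, Basis.coord_apply, Basis.repr_self, Finsupp.single_apply]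
    simp only [eq_comm]
  choose y hy using hdual
  have hyw (i j) : f (w j) (y i) = if i = j then 1 else 0 := by rw [hf.eq, hy]
  have hww (i j) : f (w i) (w j) = 0 := hW _ (w i).2 _ (w j).2
  refine ⟨fun i ↦ y i - (2⁻¹ : K) • ∑ j, f (y i) (y j) • (w j : V), fun i j ↦ ?_, fun i j ↦ ?_⟩
  · simp [hy, hww]
  · simp only [map_sub, map_smul, map_sum, LinearMap.sub_apply, LinearMap.smul_apply,
      LinearMap.coe_sum, LinearMap.coe_smul, Finset.sum_apply, Pi.smul_apply, smul_eq_mul, hy, hyw,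
      hww, mul_ite, mul_one, mul_zero, Finset.sum_ite_eq, Finset.mem_univ, ↓reduceIte,
      Finset.sum_const_zero, sub_zero]
    rw [hf.eq (y j) (y i)]
    field_simp
    ring

/-- The matrix `(f (v i) (v j))` of a family of vectors, which need not be a basis. -/
def gramMatrix (f : LinearMap.BilinForm K V) (v : ι → V) : Matrix ι ι K :=
  of fun i j ↦ f (v i) (v j)

/-- The Gram matrix of an orthogonal sum of hyperbolic planes, in a basis listing first one
isotropic vector from each plane and then the dual ones. -/
def hyperbolicMatrix (ι K : Type*) [DecidableEq ι] [Zero K] [One K] : Matrix (ι ⊕ ι) (ι ⊕ ι) K :=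
  fromBlocks 0 1 1 0

variable [Fintype ι]

theorem det_hyperbolicMatrix_ne_zero : (hyperbolicMatrix ι K).det ≠ 0 :=
  det_ne_zero_of_left_inverse (B := hyperbolicMatrix ι K) <| by
    simp [hyperbolicMatrix, fromBlocks_multiply]

theorem linearIndependent_of_det_gramMatrix_ne_zero {v : ι → V}
    (hv : (gramMatrix f v).det ≠ 0) : LinearIndependent K v := by
  refine Fintype.linearIndependent_iff.mpr fun c hc ↦ congrFun (eq_zero_of_mulVec_eq_zero hv ?_)
  ext i
  simpa [gramMatrix, mulVec, dotProduct, mul_comm] using congrArg (f (v i)) hc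

theorem exists_basis_toMatrix_eq_fromBlocks [FiniteDimensional K V] (h2 : (2 : K) ≠ 0)
    (hf : f.IsSymm) {v : ι → V} (hv : (gramMatrix f v).det ≠ 0) {n : ℕ}
    (hdim : finrank K V = Fintype.card ι + n) :
    ∃ (B : Basis (ι ⊕ Fin n) K V) (d : Fin n → K),
      LinearMap.BilinForm.toMatrix B f = fromBlocks (gramMatrix f v) 0 0 (diagonal d) := by
  have : Invertible (2 : K) := invertibleOfNonzero h2
  have hli : LinearIndependent K v :=
    linearIndependent_of_det_gramMatrix_ne_zero hv
  obtain ⟨H, bH, hbH⟩ : ∃ (H : Submodule K V) (bH : Basis ι K H), ∀ i, (bH i : V) = v i :=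
    ⟨_, .span hli, fun i ↦ by rw [Basis.span_apply]⟩
  have hH : (f.restrict H).Nondegenerate := by
    refine (LinearMap.BilinForm.nondegenerate_iff_det_ne_zero bH).mpr ?_
    convert hv
    ext i j
    simp [LinearMap.BilinForm.toMatrix_apply, gramMatrix, hbH]
  have hcompl := LinearMap.BilinForm.isCompl_orthogonal_of_restrict_nondegenerate hf.isRefl hH
  have hfin : finrank K (f.orthogonal H) = n := by
    have := Submodule.finrank_add_eq_of_isCompl hcompl
    have := finrank_eq_card_basis bH
    omega
  obtain ⟨c, hc⟩ := LinearMap.BilinForm.exists_orthogonal_basis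
    (B := f.restrict (f.orthogonal H)) ⟨fun x y ↦ hf.eq x y⟩
  let B := (bH.prod (c.reindex (finCongr hfin))).map (Submodule.prodEquivOfIsCompl _ _ hcompl)
  have hinl (i) : B (.inl i) = v i := by simp [B, hbH]
  have hinr (i) : B (.inr i) = c (Fin.cast hfin.symm i) := by simp [B]
  have horth (i j) : f (v i) (B (.inr j)) = 0 := hinr j ▸ (c _).2 _ (hbH i ▸ (bH i).2)
  refine ⟨B, fun i ↦ f (B (.inr i)) (B (.inr i)), ?_⟩
  ext (i | i) (j | j) <;> rw [LinearMap.BilinForm.toMatrix_apply]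
  · simp [gramMatrix, hinl]
  · simpa [hinl] using horth i j
  · simpa [hinl, hf.eq] using horth j i
  · rcases eq_or_ne i j with rfl | hij
    · simp
    · simpa [hij, hinr] using hc ((Fin.cast_injective _).ne hij)

theorem exists_basis_toMatrix_eq_hyperbolic_diagonal [FiniteDimensional K V] (h2 : (2 : K) ≠ 0)
    (hf : f.IsSymm) (hn : f.Nondegenerate) {W : Submodule K V} (hW : IsTotallyIsotropic f W)
    {m n : ℕ} (hWdim : finrank K W = m) (hdim : finrank K V = 2 * m + n) :
    ∃ (B : Basis ((Fin m ⊕ Fin m) ⊕ Fin n) K V) (d : Fin n → K),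
      LinearMap.BilinForm.toMatrix B f =
        fromBlocks (hyperbolicMatrix (Fin m) K) 0 0 (diagonal d) := by
  let w := finBasisOfFinrankEq K W hWdim
  obtain ⟨z, hzw, hzz⟩ := exists_isotropic_dual_family h2 hf hn hW w
  have hgram : gramMatrix f (Sum.elim (fun i ↦ (w i : V)) z) = hyperbolicMatrix (Fin m) K := by
    ext (i | i) (j | j)
    · exact hW _ (w i).2 _ (w j).2
    · simp [gramMatrix, hyperbolicMatrix, hf.eq (w i : V), hzw, one_apply, eq_comm]
    · simp [gramMatrix, hyperbolicMatrix, hzw, one_apply]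
    · exact hzz i j
  rw [← hgram]
  exact exists_basis_toMatrix_eq_fromBlocks h2 hf (hgram ▸ det_hyperbolicMatrix_ne_zero)
    (by simpa [two_mul] using hdim)

end WittDecomposition

section Similarity

open Matrix

variable {K V V' : Type*} [Field K] [AddCommGroup V] [Module K V] [AddCommGroup V'] [Module K V']

/-- Two bilinear forms are similar if a linear isomorphism carries the first to a nonzero scalar
multiple of the second. -/
def IsSimilar (g : LinearMap.BilinForm K V') (f : LinearMap.BilinForm K V) : Prop :=
  ∃ r : K, r ≠ 0 ∧ ∃ e : V' ≃ₗ[K] V, ∀ x y, f (e x) (e y) = r * g x y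

theorem isSimilar_of_basis {ι : Type*} {f : LinearMap.BilinForm K V} {g : LinearMap.BilinForm K V'}
    (B : Basis ι K V) (B' : Basis ι K V') {r : K} (hr : r ≠ 0)
    (h : ∀ i j, f (B i) (B j) = r * g (B' i) (B' j)) : IsSimilar g f := by
  let e := B'.equiv B (Equiv.refl ι)
  have hext : f.comp e.toLinearMap e.toLinearMap = r • g :=
    LinearMap.BilinForm.ext_basis B' fun i j ↦ by simpa [e] using h i j
  exact ⟨r, hr, e, fun x y ↦ LinearMap.congr_fun₂ hext x y⟩

theorem exists_det_toMatrix_eq_sq_mul {ι κ : Type*} [Fintype ι] [DecidableEq ι] [Fintype κ]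
    [DecidableEq κ] (B : Basis ι K V) (C : Basis κ K V) (f : LinearMap.BilinForm K V) :
    ∃ s : K, s ≠ 0 ∧ (LinearMap.BilinForm.toMatrix C f).det =
      s ^ 2 * (LinearMap.BilinForm.toMatrix B f).det := by
  let C' := C.reindex (C.indexEquiv B)
  have hC' : (LinearMap.BilinForm.toMatrix C' f).det = (LinearMap.BilinForm.toMatrix C f).det := by
    rw [← det_submatrix_equiv_self (C.indexEquiv B)]
    congr 1
    ext i j
    simp [C', LinearMap.BilinForm.toMatrix_apply]
  refine ⟨(B.toMatrix C').det, ?_, ?_⟩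
  · exact det_ne_zero_of_right_inverse (B.toMatrix_mul_toMatrix_flip C')
  · rw [← hC', ← LinearMap.BilinForm.toMatrix_mul_basis_toMatrix B C' f, det_mul, det_mul,
      det_transpose]
    ring

/-- The hyperbolic part absorbs the factor `d 0 / d' 0` by rescaling one half of its basis. -/
theorem isSimilar_of_toMatrix_eq_hyperbolic_diagonal {ι : Type*} [Fintype ι] [DecidableEq ι]
    {f : LinearMap.BilinForm K V} {g : LinearMap.BilinForm K V'}
    (B : Basis ((ι ⊕ ι) ⊕ Fin 2) K V) (B' : Basis ((ι ⊕ ι) ⊕ Fin 2) K V') {d d' : Fin 2 → K}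
    (hB : LinearMap.BilinForm.toMatrix B f = fromBlocks (hyperbolicMatrix ι K) 0 0 (diagonal d))
    (hB' : LinearMap.BilinForm.toMatrix B' g = fromBlocks (hyperbolicMatrix ι K) 0 0 (diagonal d'))
    (hd : d 0 ≠ 0) (hd' : d' 0 ≠ 0) {q : K} (hq : q ≠ 0)
    (hdet : d' 0 * d' 1 = q ^ 2 * (d 0 * d 1)) : IsSimilar g f := by
  have hr : d 0 / d' 0 ≠ 0 := div_ne_zero hd hd'
  let c : (ι ⊕ ι) ⊕ Fin 2 → Kˣ :=
    Sum.elim (Sum.elim (fun _ ↦ Units.mk0 _ hr) fun _ ↦ 1) ![1, Units.mk0 _ (mul_ne_zero hq hr)]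
  refine isSimilar_of_basis (B.unitsSMul c) B' hr fun i j ↦ ?_
  rw [← LinearMap.BilinForm.toMatrix_apply B' g, hB', Basis.unitsSMul_apply, Basis.unitsSMul_apply,
    Units.smul_def, Units.smul_def, map_smul, map_smul, LinearMap.smul_apply,
    ← LinearMap.BilinForm.toMatrix_apply B f, hB]
  rcases i with (i | i) | i <;> rcases j with (j | j) | j
  case inr.inr =>
    fin_cases i <;> fin_cases j <;> simp [c]
    · field_simp
    · field_simp
      linear_combination -hdet
  all_goals simp [c, hyperbolicMatrix]

theorem isSimilar_of_isTotallyIsotropic [FiniteDimensional K V] [FiniteDimensional K V']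
    (h2 : (2 : K) ≠ 0) {ι : Type*} [Fintype ι] [DecidableEq ι] {f : LinearMap.BilinForm K V}
    {g : LinearMap.BilinForm K V'} (hf : f.IsSymm) (hg : g.IsSymm) (hfn : f.Nondegenerate)
    (hgn : g.Nondegenerate) {m : ℕ} (hV : finrank K V = 2 * m + 2) (hV' : finrank K V' = 2 * m + 2)
    {W : Submodule K V} {W' : Submodule K V'} (hW : IsTotallyIsotropic f W)
    (hW' : IsTotallyIsotropic g W') (hWdim : finrank K W = m) (hWdim' : finrank K W' = m)
    (b : Basis ι K V) (b' : Basis ι K V') {c : K} (hc : c ≠ 0)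
    (hdet : (LinearMap.BilinForm.toMatrix b' g).det =
      c ^ 2 * (LinearMap.BilinForm.toMatrix b f).det) : IsSimilar g f := by
  obtain ⟨B, d, hB⟩ := exists_basis_toMatrix_eq_hyperbolic_diagonal h2 hf hfn hW hWdim hV
  obtain ⟨B', d', hB'⟩ := exists_basis_toMatrix_eq_hyperbolic_diagonal h2 hg hgn hW' hWdim' hV'
  obtain ⟨s, hs, hsb⟩ := exists_det_toMatrix_eq_sq_mul B b f
  obtain ⟨s', hs', hsb'⟩ := exists_det_toMatrix_eq_sq_mul b' B' g
  have hdetB := (LinearMap.BilinForm.nondegenerate_iff_det_ne_zero B).mp hfn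
  have hdetB' := (LinearMap.BilinForm.nondegenerate_iff_det_ne_zero B').mp hgn
  rw [hdet, hsb] at hsb'
  rw [hB, det_fromBlocks_zero₂₁, det_diagonal, Fin.prod_univ_two] at hdetB hsb'
  rw [hB', det_fromBlocks_zero₂₁, det_diagonal, Fin.prod_univ_two] at hdetB' hsb'
  refine isSimilar_of_toMatrix_eq_hyperbolic_diagonal B B' hB hB'
    (left_ne_zero_of_mul (right_ne_zero_of_mul hdetB))
    (left_ne_zero_of_mul (right_ne_zero_of_mul hdetB'))
    (mul_ne_zero (mul_ne_zero hs' hc) hs) (mul_left_cancel₀ (left_ne_zero_of_mul hdetB) ?_)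
  linear_combination hsb'

end Similarity

section Transport

variable {K E V : Type*} [Field K] [CommRing E] [Algebra K E] [AddCommGroup V] [Module K V]
  {σ : E →ₐ[K] E} {f : LinearMap.BilinForm K V}

theorem IsSimilar.exists_injective_algHom_end (hσ : Function.Involutive σ) {t : Dual K E}
    (h : IsSimilar (twistedForm σ t) f) :
    ∃ ι : E →ₐ[K] End K V, Function.Injective ι ∧ ∀ a x y, f (ι a x) y = f x (ι (σ a) y) := by
  obtain ⟨r, -, e, he⟩ := h
  refine ⟨(e.conjAlgEquiv K).toAlgHom.comp (Algebra.lmul K E),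
    (e.conjAlgEquiv K).injective.comp Algebra.lmul_injective, fun a x y ↦ ?_⟩
  obtain ⟨x, rfl⟩ := e.surjective x
  obtain ⟨y, rfl⟩ := e.surjective y
  have hadj : twistedForm σ t (a * x) y = twistedForm σ t x (σ a * y) := by
    simp [hσ a, mul_assoc, mul_left_comm]
  simpa [LinearEquiv.conjAlgEquiv_apply, he] using congrArg (r * ·) hadj

theorem exists_isSimilar_twistedForm [FiniteDimensional K E] [Algebra.Etale K E]
    [FiniteDimensional K V] (h2 : (2 : K) ≠ 0) (hσ : Function.Involutive σ) {m : ℕ}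
    (hE : finrank K E = 2 * m + 2) (hfix : finrank K (fixedElements σ) = m + 1)
    (hV : finrank K V = 2 * m + 2) (hf : f.IsSymm) (hfn : f.Nondegenerate) {W : Submodule K V}
    (hW : IsTotallyIsotropic f W) (hWdim : finrank K W = m) {T : Dual K E}
    (hT : ∀ x, T (σ x) = T x) {ι : Type*} [Fintype ι] [DecidableEq ι] (b : Basis ι K V)
    (b' : Basis ι K E) {c : K} (hc : c ≠ 0)
    (hdet : (LinearMap.BilinForm.toMatrix b' (twistedForm σ T)).det =
      c ^ 2 * (LinearMap.BilinForm.toMatrix b f).det) :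
    ∃ t : Dual K E, IsSimilar (twistedForm σ t) f := by
  have hdetf := (LinearMap.BilinForm.nondegenerate_iff_det_ne_zero b).mp hfn
  have hTn : (twistedForm σ T).Nondegenerate :=
    (LinearMap.BilinForm.nondegenerate_iff_det_ne_zero b').mpr <|
      hdet ▸ mul_ne_zero (pow_ne_zero 2 hc) hdetf
  obtain ⟨u, hu, huu, ⟨r, hr⟩, W', hWdim', hW'⟩ :=
    exists_isUnit_fixed_isTotallyIsotropic h2 hσ (by omega) hT hTn (k := m) (by omega)
  have hr0 : r ≠ 0 := left_ne_zero_of_mul (hr ▸ (huu.map (Algebra.norm K)).ne_zero)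
  have htσ (x : E) : (T ∘ₗ LinearMap.mulLeft K u) (σ x) = (T ∘ₗ LinearMap.mulLeft K u) x := by
    simpa [mem_fixedElements.mp hu] using hT (u * x)
  have hdett : (LinearMap.BilinForm.toMatrix b'
      (twistedForm σ (T ∘ₗ LinearMap.mulLeft K u))).det =
        (r * c) ^ 2 * (LinearMap.BilinForm.toMatrix b f).det := by
    rw [det_toMatrix_twistedForm_comp_mulLeft, hdet, hr]
    ring
  have htn : (twistedForm σ (T ∘ₗ LinearMap.mulLeft K u)).Nondegenerate :=
    (LinearMap.BilinForm.nondegenerate_iff_det_ne_zero b').mpr <|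
      hdett ▸ mul_ne_zero (pow_ne_zero 2 (mul_ne_zero hr0 hc)) hdetf
  exact ⟨_, isSimilar_of_isTotallyIsotropic h2 hf (twistedForm_isSymm hσ htσ) hfn htn hV hE hW hW'
    hWdim hWdim' b b' (mul_ne_zero hr0 hc) hdett⟩

end Transport

/-- Let `K` be a field of characteristic `≠ 2`, `ℓ ≥ 1`, `E` a finite étale
commutative `K`-algebra of dimension `2ℓ` with involution `σ`, `dim_K E^σ = ℓ`.  Let `V` be a
`2ℓ`-dimensional `K`-vector space with a nondegenerate symmetric bilinear form `f` of Witt index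
`≥ ℓ - 1`.  If there is an invertible `b ∈ E` with `σ b = b` such that the discriminants of
`φ_b` and `f` agree in `K^× / (K^×)²` (determinants of Gram matrices differ by a nonzero
square), then there is an injective `K`-algebra homomorphism `ι : E → End_K V` with
`f (ι a x) y = f x (ι (σ a) y)`. -/
theorem statement8 {K E V : Type u} [Field K] [CommRing E] [Algebra K E]
    [FiniteDimensional K E] [Algebra.Etale K E]
    [AddCommGroup V] [Module K V] [FiniteDimensional K V]
    (hchar : ringChar K ≠ 2)
    (ℓ : ℕ) (hℓ : 1 ≤ ℓ)
    (hdimE : Module.finrank K E = 2 * ℓ)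
    (σ : E →ₐ[K] E) (hσ : ∀ x, σ (σ x) = x)
    (hfix : Module.finrank K (LinearMap.ker (σ.toLinearMap - LinearMap.id)) = ℓ)
    (hdimV : Module.finrank K V = 2 * ℓ)
    (f : V →ₗ[K] V →ₗ[K] K)
    (hsym : ∀ x y : V, f x y = f y x)
    (hnd : ∀ x : V, (∀ y : V, f x y = 0) → x = 0)
    (hW : ∃ W : Submodule K V, Module.finrank K W = ℓ - 1 ∧ ∀ w ∈ W, ∀ w' ∈ W, f w w' = 0)
    (b : E) (hb : IsUnit b) (hbs : σ b = b)
    (hdisc : ∃ (bE : Module.Basis (Fin (2 * ℓ)) K E) (bV : Module.Basis (Fin (2 * ℓ)) K V) (c : K),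
      c ≠ 0 ∧
        (Matrix.of fun i j => Algebra.trace K E (bE i * b * σ (bE j))).det =
          c ^ 2 * (Matrix.of fun i j => f (bV i) (bV j)).det) :
    ∃ ι : E →ₐ[K] Module.End K V, Function.Injective ι ∧
      ∀ (a : E) (x y : V), f (ι a x) y = f x (ι (σ a) y) := by
  have h2 : (2 : K) ≠ 0 := Ring.two_ne_zero hchar
  obtain ⟨m, rfl⟩ : ∃ m, ℓ = m + 1 := ⟨ℓ - 1, by omega⟩
  obtain ⟨W, hWdim, hWiso⟩ := hW
  obtain ⟨bE, bV, c, hc, hdet⟩ := hdisc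
  have hf : LinearMap.BilinForm.IsSymm f := ⟨hsym⟩
  have hfn : LinearMap.BilinForm.Nondegenerate f :=
    hf.isRefl.nondegenerate_iff_separatingLeft.mpr hnd
  have hgram : LinearMap.BilinForm.toMatrix bV f = Matrix.of fun i j ↦ f (bV i) (bV j) :=
    Matrix.ext fun i j ↦ LinearMap.BilinForm.toMatrix_apply bV f i j
  rw [← toMatrix_twistedForm_trace_comp_mulLeft, ← hgram] at hdet
  obtain ⟨t, ht⟩ := exists_isSimilar_twistedForm h2 hσ hdimE hfix hdimV hf hfn hWiso hWdim
    (trace_mulLeft_map hσ hbs) bV bE hc hdet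
  exact ht.exists_injective_algHom_end hσ
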